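/- arXiv:1812.11534 — 2 statements merged into one kernel-verified Lean document; each statement's English description precedes it below -/
import Mathlib

section
/- Let F = {f₁,…,f_s, f_{s+1},…,f_{s+k}} ⊂ ℂ[x₁,…,xₙ] with k ≥ 1, and let p ∈ ℂⁿ satisfy f_i(p) = 0 for all i and rank(J(F)(p)) = s. Assume the Krull dimension of ℂ[x₁,…,xₙ]/⟨F⟩ is at most n − s − 1 and that m = max_i deg(f_i) > 1. Then there exist polynomials f′₁,…,f′_s, f′_{s+1} ∈ Δ_p(F) such that rank(J(f′₁,…,f′_{s+1})(p)) = s + 1 and max_j deg(f′_j) ≤ m. -/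
open MvPolynomial

/-- The rank over ℂ of the Jacobian matrix of a finite polynomial system, evaluated at `p`. -/
noncomputable def jacRank {n : ℕ} {ι : Type*} [Fintype ι]
    (g : ι → MvPolynomial (Fin n) ℂ) (p : Fin n → ℂ) : ℕ :=
  (Matrix.of fun (i : ι) (j : Fin n) => eval p (pderiv j (g i))).rank

open MvPolynomial

/-- `DeltaSet F p` is the smallest set `Δ_p(F)` of polynomials such that
(1) `F ⊆ Δ_p(F)`;
(2) `a • h ∈ Δ_p(F)` for every `h ∈ Δ_p(F)` and every nonzero scalar `a ∈ ℂ`;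
(3) `h₁ + h₂ ∈ Δ_p(F)` for all `h₁, h₂ ∈ Δ_p(F)` with `h₁(p) + h₂(p) = 0`;
(4) `∂h/∂x_i ∈ Δ_p(F)` for every `h ∈ Δ_p(F)` and index `i` with `(∂h/∂x_i)(p) = 0`. -/
inductive DeltaSet {n : ℕ} (F : Set (MvPolynomial (Fin n) ℂ)) (p : Fin n → ℂ) :
    MvPolynomial (Fin n) ℂ → Prop
  | base {f : MvPolynomial (Fin n) ℂ} (hf : f ∈ F) : DeltaSet F p f
  | smul {h : MvPolynomial (Fin n) ℂ} (a : ℂ) (ha : a ≠ 0) (hh : DeltaSet F p h) :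
      DeltaSet F p (C a * h)
  | add {h₁ h₂ : MvPolynomial (Fin n) ℂ} (hh₁ : DeltaSet F p h₁) (hh₂ : DeltaSet F p h₂)
      (hsum : eval p h₁ + eval p h₂ = 0) : DeltaSet F p (h₁ + h₂)
  | deriv {h : MvPolynomial (Fin n) ℂ} (i : Fin n) (hh : DeltaSet F p h)
      (hz : eval p (pderiv i h) = 0) : DeltaSet F p (pderiv i h)

/-!
Let `L` be the linear span of `Δ_p(F)` and choose `g₁, …, g_r ∈ L` whose gradients at `p` form a
basis of the space of all gradients `∇h(p)`, `h ∈ L`. Let `m` be the maximal ideal of `p` and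
`J = ⟨g₁, …, g_r⟩`. The `gᵢ` cut out a manifold near `p`, so the Euler vector field at `p` can be
corrected to a derivation `E` which annihilates every `gᵢ`. If `h ∈ L` has zero gradient at `p`,
then all `∂ᵢh` lie in `L`; thus `L ⊆ J + m ^ N` gives `E h = ∑ᵢ E(xᵢ) ∂ᵢh ∈ J + m ^ (N + 1)`.
Modulo `J`, `E` acts on `m ^ N / m ^ (N + 1)` as multiplication by `N`, so also
`h ∈ J + m ^ (N + 1)`. Inductively `L ⊆ J + m ^ N` for all `N`, so by Krull's intersection theorem
`L` lies in `J` locally at `p`. Krull's height theorem in the local ring at `p` then gives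
`n ≤ dim V(L) + r ≤ dim V(F) + r`, whence `r > s`.
-/

/-- A derivation which preserves `J` and behaves, modulo `J` and higher powers of `m`, like the
Euler vector field `∑ᵢ (xᵢ - pᵢ) ∂ᵢ` at the point of `m`: it is the identity on `m / m²`. -/
structure IsEulerDerivation {R A : Type*} [CommRing R] [CommRing A] [Algebra R A]
    (m J : Ideal A) (E : Derivation R A A) : Prop where
  apply_mem : ∀ a, E a ∈ m
  apply_sub_self_mem : ∀ x ∈ m, E x - x ∈ J ⊔ m ^ 2
  apply_mem_of_mem : ∀ x ∈ J, E x ∈ J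

theorem mul_mem_sup_pow_add {A : Type*} [CommRing A] {m J : Ideal A} {x y : A} {j k : ℕ}
    (hx : x ∈ m ^ j) (hy : y ∈ J ⊔ m ^ k) : x * y ∈ J ⊔ m ^ (j + k) := by
  have h : x * y ∈ m ^ j * (J ⊔ m ^ k) := Ideal.mul_mem_mul hx hy
  rw [Ideal.mul_sup, ← pow_add] at h
  exact sup_le_sup_right (Ideal.mul_le_right : m ^ j * J ≤ J) _ h

namespace IsEulerDerivation

variable {R A : Type*} [CommRing R] [CommRing A] [Algebra R A] {m J : Ideal A}
  {E : Derivation R A A}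

theorem apply_sub_nsmul_mem (hE : IsEulerDerivation m J E) (N : ℕ) :
    ∀ e ∈ m ^ N, E e - N • e ∈ J ⊔ m ^ (N + 1) := by
  induction N with
  | zero =>
    intro e _
    simpa using Ideal.mem_sup_right (hE.apply_mem e)
  | succ N ih =>
    intro e he
    rw [pow_succ'] at he
    refine Submodule.mul_induction_on he (fun x hx y hy => ?_) fun x y hx hy => ?_
    · have hxy := mul_mem_sup_pow_add (j := 1) (by simpa using hx) (ih y hy)
      have hyx := mul_mem_sup_pow_add hy (hE.apply_sub_self_mem x hx)
      have hleibniz : E (x * y) - (N + 1) • (x * y) = x * (E y - N • y) + y * (E x - x) := by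
        simp only [Derivation.leibniz, smul_eq_mul, nsmul_eq_mul]
        push_cast
        ring
      rw [hleibniz]
      exact add_mem (by rwa [add_comm 1] at hxy) hyx
    · rw [map_add, smul_add, add_sub_add_comm]
      exact add_mem hx hy

theorem mem_sup_pow_succ_of_apply_mem (hE : IsEulerDerivation m J E) {N : ℕ}
    (hN : IsUnit (N : A)) {x : A} (hx : x ∈ J ⊔ m ^ N) (hEx : E x ∈ J ⊔ m ^ (N + 1)) :
    x ∈ J ⊔ m ^ (N + 1) := by
  obtain ⟨j, hj, e, he, rfl⟩ := Submodule.mem_sup.mp hx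
  refine add_mem (Ideal.mem_sup_left hj) ?_
  have hEe : E e ∈ J ⊔ m ^ (N + 1) := by
    rw [map_add] at hEx
    exact ((J ⊔ m ^ (N + 1)).add_mem_iff_right
      (Ideal.mem_sup_left (hE.apply_mem_of_mem j hj))).mp hEx
  have hNe : N • e ∈ J ⊔ m ^ (N + 1) := by
    simpa only [sub_sub_cancel] using sub_mem hEe (hE.apply_sub_nsmul_mem N e he)
  rw [nsmul_eq_mul] at hNe
  exact (Ideal.unit_mul_mem_iff_mem _ hN).mp hNe

end IsEulerDerivation

theorem exists_notMem_mul_mem_of_forall_mem_sup_pow {A : Type*} [CommRing A] [IsNoetherianRing A]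
    {m J : Ideal A} (hm : m ≠ ⊤) {x : A} (hx : ∀ N : ℕ, x ∈ J ⊔ m ^ N) : ∃ s ∉ m, s * x ∈ J := by
  have hx' : Ideal.Quotient.mk J x ∈ (⨅ N : ℕ, m ^ N • ⊤ : Submodule A (A ⧸ J)) := by
    rw [Submodule.mem_iInf]
    intro N
    obtain ⟨j, hj, e, he, hje⟩ := Submodule.mem_sup.mp (hx N)
    rw [← hje, map_add, Ideal.Quotient.eq_zero_iff_mem.mpr hj, zero_add]
    have h := Submodule.smul_mem_smul he (Submodule.mem_top (x := (1 : A ⧸ J)))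
    rwa [Algebra.smul_def, mul_one] at h
  obtain ⟨r, hr⟩ := (Ideal.mem_iInf_smul_pow_eq_bot_iff m _).mp hx'
  refine ⟨1 - r, fun h => hm ((Ideal.eq_top_iff_one m).mpr ?_), ?_⟩
  · simpa only [sub_add_cancel] using add_mem h r.2
  · rw [← Ideal.Quotient.eq_zero_iff_mem, sub_mul, one_mul, map_sub, sub_eq_zero]
    exact hr.symm

theorem lt_of_natCast_le_add_of_lt_natCast_sub {d : WithBot ℕ∞} {a b c : ℕ}
    (h : (a : WithBot ℕ∞) ≤ d + c) (hd : d < ((a - b : ℕ) : WithBot ℕ∞)) : b < c := by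
  induction d with
  | bot => simp at h
  | coe d =>
    lift d to ℕ using by rintro rfl; simp at hd
    have hd' : d < a - b := Nat.cast_lt (α := WithBot ℕ∞).mp hd
    norm_cast at h
    omega

theorem ringKrullDim_le_of_isLocalization {R S : Type*} [CommRing R] [CommRing S] [Algebra R S]
    (M : Submonoid R) [IsLocalization M S] : ringKrullDim S ≤ ringKrullDim R :=
  Order.krullDim_le_of_strictMono (PrimeSpectrum.comap (algebraMap R S)) <|
    Monotone.strictMono_of_injective (fun _ _ h => Ideal.comap_mono h)
      (PrimeSpectrum.localization_comap_injective S M)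

theorem height_le_ringKrullDim_quotient_add_encard {A : Type*} [CommRing A] [IsNoetherianRing A]
    {I m : Ideal A} [m.IsPrime] (hIm : I ≤ m) (s : Set A) (hsI : s ⊆ I)
    (hs : ∀ x ∈ I, ∃ t ∉ m, t * x ∈ Ideal.span s) :
    (m.height : WithBot ℕ∞) ≤ ringKrullDim (A ⧸ I) + s.encard := by
  let O := Localization.AtPrime m
  have hspan : I.map (algebraMap A O) = Ideal.span (algebraMap A O '' s) := by
    rw [← Ideal.map_span]
    refine le_antisymm (Ideal.map_le_iff_le_comap.mpr fun x hx => ?_)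
      (Ideal.map_mono (Ideal.span_le.mpr hsI))
    obtain ⟨t, ht, htx⟩ := hs x hx
    exact (Ideal.unit_mul_mem_iff_mem _ (IsLocalization.map_units O (⟨t, ht⟩ : m.primeCompl))).mp
      (map_mul (algebraMap A O) t x ▸ Ideal.mem_map_of_mem _ htx)
  have hjac : algebraMap A O '' s ⊆ Ring.jacobson O := by
    rw [IsLocalRing.ringJacobson_eq_maximalIdeal, ← Localization.AtPrime.map_eq_maximalIdeal]
    rintro _ ⟨x, hx, rfl⟩
    exact Ideal.mem_map_of_mem _ (hIm (hsI hx))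
  calc (m.height : WithBot ℕ∞) = ringKrullDim O :=
        (IsLocalization.AtPrime.ringKrullDim_eq_height m O).symm
    _ ≤ ringKrullDim (O ⧸ I.map (algebraMap A O)) + (algebraMap A O '' s).encard :=
        hspan ▸ ringKrullDim_le_ringKrullDim_quotient_add_encard _ hjac
    _ ≤ ringKrullDim (A ⧸ I) + s.encard := by
        gcongr
        · exact ringKrullDim_le_of_isLocalization
            (Algebra.algebraMapSubmonoid (A ⧸ I) m.primeCompl)
        · exact_mod_cast Set.encard_image_le _ _

theorem height_eq_natCard_of_isMaximal {K σ : Type*} [Field K] [Finite σ]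
    (m : Ideal (MvPolynomial σ K)) [m.IsMaximal] : m.height = Nat.card σ := by
  induction σ using Finite.induction_empty_option with
  | of_equiv e ih =>
    let φ := (renameEquiv K e).symm.toRingEquiv
    have : (m.map φ).IsMaximal := Ideal.map_isMaximal_of_equiv φ
    rw [← φ.height_map m, ih, Nat.card_congr e]
  | h_empty =>
    have h := Ideal.height_le_ringKrullDim_of_ne_top (Ideal.IsMaximal.ne_top ‹m.IsMaximal›)
    rw [MvPolynomial.ringKrullDim_of_isNoetherianRing, ringKrullDim_eq_zero_of_field] at h
    simpa using h
  | @h_option τ _ ih =>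
    let φ := (optionEquivLeft K τ).toRingEquiv
    have : (m.map φ).IsMaximal := Ideal.map_isMaximal_of_equiv φ
    have : ((m.map φ).under (MvPolynomial τ K)).IsMaximal :=
      Polynomial.isMaximal_comap_C_of_isJacobsonRing (m.map φ)
    have : (m.map φ).LiesOver ((m.map φ).under (MvPolynomial τ K)) := ⟨rfl⟩
    rw [← φ.height_map m,
      Polynomial.height_eq_height_add_one ((m.map φ).under (MvPolynomial τ K)) (m.map φ), ih]
    simp

theorem sum_smul_derivation_apply {R A ι : Type*} [CommRing R] [CommRing A] [Algebra R A]
    [Fintype ι] (t : ι → A) (η : ι → Derivation R A A) (a : A) :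
    (∑ j, t j • η j) a = ∑ j, t j * η j a := by
  rw [← Derivation.coeFnAddMonoidHom_apply, map_sum, Finset.sum_apply]
  rfl

section TangentCorrection

variable {R A ι : Type*} [CommRing R] [CommRing A] [Algebra R A] [Fintype ι] [DecidableEq ι]

/-- The derivation `det G • D - ∑ⱼ tⱼ • ηⱼ` with `G = (ηⱼ gₖ)` and `t = adj G · (D gₗ)ₗ`: by
Cramer's rule, it corrects `D` along the vector fields `η` so as to annihilate every `gₖ`. The
factor `det G` replaces division by `det G`, so that no localization is needed. -/
noncomputable def tangentCorrection (D : Derivation R A A) (η : ι → Derivation R A A) (g : ι → A) :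
    Derivation R A A :=
  let G := Matrix.of fun k j => η j (g k)
  G.det • D - ∑ j, G.adjugate.mulVec (fun l => D (g l)) j • η j

theorem tangentCorrection_apply (D : Derivation R A A) (η : ι → Derivation R A A) (g : ι → A)
    (a : A) :
    tangentCorrection D η g a = (Matrix.of fun k j => η j (g k)).det * D a -
      ∑ j, (Matrix.of fun k j => η j (g k)).adjugate.mulVec (fun l => D (g l)) j * η j a := by
  simp only [tangentCorrection, Derivation.sub_apply, Derivation.smul_apply, smul_eq_mul,
    sum_smul_derivation_apply]

theorem tangentCorrection_apply_self (D : Derivation R A A) (η : ι → Derivation R A A) (g : ι → A)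
    (k : ι) : tangentCorrection D η g (g k) = 0 := by
  set G : Matrix ι ι A := Matrix.of fun k j => η j (g k)
  have hcramer : ∑ j, G.adjugate.mulVec (fun l => D (g l)) j * η j (g k) = G.det * D (g k) := by
    calc ∑ j, G.adjugate.mulVec (fun l => D (g l)) j * η j (g k)
        = G.mulVec (G.adjugate.mulVec fun l => D (g l)) k :=
          Finset.sum_congr rfl fun j _ => mul_comm _ _
      _ = G.det * D (g k) := by
          rw [Matrix.mulVec_mulVec, Matrix.mul_adjugate, Matrix.smul_mulVec, Matrix.one_mulVec]
          rfl
  rw [tangentCorrection_apply, hcramer, sub_self]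

theorem IsEulerDerivation.tangentCorrection {m : Ideal A} {D : Derivation R A A}
    (hD : IsEulerDerivation m ⊥ D) {g : ι → A} (hg : ∀ k, g k ∈ m) (η : ι → Derivation R A A)
    (hdet : (Matrix.of fun k j => η j (g k)).det - 1 ∈ m) :
    IsEulerDerivation m (Ideal.span (Set.range g)) (tangentCorrection D η g) where
  apply_mem a := by
    rw [tangentCorrection_apply]
    exact sub_mem (Ideal.mul_mem_left _ _ (hD.apply_mem a)) <| sum_mem fun j _ =>
      Ideal.mul_mem_right _ _ <| sum_mem fun l _ => Ideal.mul_mem_left _ _ (hD.apply_mem _)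
  apply_sub_self_mem x hx := by
    set J := Ideal.span (Set.range g)
    have hDx : D x - x ∈ m ^ 2 := by simpa using hD.apply_sub_self_mem x hx
    have hDg (l : ι) : D (g l) ∈ J ⊔ m ^ 2 := by
      have hDgl : D (g l) - g l ∈ m ^ 2 := by simpa using hD.apply_sub_self_mem _ (hg l)
      have hgl : g l ∈ J := Ideal.subset_span ⟨l, rfl⟩
      simpa only [add_sub_cancel] using
        add_mem (Ideal.mem_sup_left hgl) (Ideal.mem_sup_right (S := J) hDgl)
    have hdetDx : ((Matrix.of fun k j => η j (g k)).det - 1) * D x ∈ m ^ 2 :=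
      pow_two m ▸ Ideal.mul_mem_mul hdet (hD.apply_mem x)
    rw [tangentCorrection_apply, sub_right_comm]
    refine sub_mem (Ideal.mem_sup_right ?_) <| sum_mem fun j _ =>
      Ideal.mul_mem_right _ _ <| sum_mem fun l _ => Ideal.mul_mem_left _ _ (hDg l)
    convert add_mem hdetDx hDx using 1
    ring
  apply_mem_of_mem x hx := by
    obtain ⟨a, rfl⟩ := Ideal.mem_span_range_iff_exists_fun.mp hx
    rw [map_sum]
    refine sum_mem fun k _ => ?_
    rw [Derivation.leibniz, tangentCorrection_apply_self, smul_zero, zero_add]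
    exact Ideal.mul_mem_right _ _ (Ideal.subset_span ⟨k, rfl⟩)

end TangentCorrection

theorem exists_fun_fin_finrank_map {K V W : Type*} [DivisionRing K] [AddCommGroup V] [Module K V]
    [AddCommGroup W] [Module K W] (φ : V →ₗ[K] W) (L : Submodule K V) [Module.Finite K (L.map φ)] :
    ∃ g : Fin (Module.finrank K (L.map φ)) → V, (∀ k, g k ∈ L) ∧
      (LinearIndependent K fun k => φ (g k)) ∧
      L.map φ = (Submodule.span K (Set.range g)).map φ := by
  let b := Module.finBasis K (L.map φ)
  choose g hgL hgb using fun k => Submodule.mem_map.mp (b k).2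
  refine ⟨g, hgL, ?_, ?_⟩
  · simp only [hgb]
    exact b.linearIndependent.map' _ (Submodule.ker_subtype _)
  · rw [Submodule.map_span, ← Set.range_comp]
    simp only [Function.comp_def, hgb]
    exact ((Submodule.span_range_subtype_eq_top_iff _ fun k => (b k).2).mp b.span_eq).symm

section Polynomial

variable {σ K : Type*}

theorem ker_eval_eq_span_range_X_sub_C [CommRing K] (p : σ → K) :
    RingHom.ker (eval p) = Ideal.span (Set.range fun i => X i - C (p i)) := by
  set I := Ideal.span (Set.range fun i => X i - C (p i))
  refine le_antisymm (fun h hh => ?_) (Ideal.span_le.mpr ?_)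
  · have hmk : Ideal.Quotient.mk I = ((Ideal.Quotient.mk I).comp C).comp (eval p) :=
      ringHom_ext (by simp) fun i => by
        simpa using Ideal.Quotient.eq.mpr (Ideal.subset_span ⟨i, rfl⟩ : X i - C (p i) ∈ I)
    rw [← Ideal.Quotient.eq_zero_iff_mem, hmk, RingHom.comp_apply, RingHom.mem_ker.mp hh, map_zero]
  · rintro _ ⟨i, rfl⟩
    simp

theorem isMaximal_ker_eval [Field K] (p : σ → K) : (RingHom.ker (eval p)).IsMaximal :=
  RingHom.ker_isMaximal_of_surjective _ fun a => ⟨C a, eval_C a⟩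

theorem totalDegree_pderiv_le [CommSemiring K] (i : σ) (h : MvPolynomial σ K) :
    (pderiv i h).totalDegree ≤ h.totalDegree := by
  conv_lhs => rw [h.as_sum, map_sum]
  refine (totalDegree_finsetSum _ _).trans (Finset.sup_le fun v hv => ?_)
  rw [pderiv_monomial]
  exact (totalDegree_monomial_le _ _).trans
    ((Finsupp.degree_mono tsub_le_self).trans (le_totalDegree hv))

/-- The gradient `∇h(p)`, as a linear map in the polynomial `h`. -/
noncomputable def gradAt [CommRing K] (p : σ → K) : MvPolynomial σ K →ₗ[K] σ → K where
  toFun h i := eval p (pderiv i h)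
  map_add' _ _ := by ext; simp
  map_smul' _ _ := by ext; simp

theorem derivation_eq_sum_pderiv [CommRing K] [Fintype σ]
    (D : Derivation K (MvPolynomial σ K) (MvPolynomial σ K)) (h : MvPolynomial σ K) :
    D h = ∑ i, D (X i) * pderiv i h := by
  classical
  have hD : D = ∑ i, D (X i) • pderiv i := derivation_ext fun j => by
    simp [sum_smul_derivation_apply, pderiv_X, Pi.single_apply]
  conv_lhs => rw [hD, sum_smul_derivation_apply]

variable [Finite σ]

theorem isEulerDerivation_mkDerivation_X_sub_C [CommRing K] (p : σ → K) :
    IsEulerDerivation (RingHom.ker (eval p)) ⊥ (mkDerivation K fun i => X i - C (p i)) := by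
  cases nonempty_fintype σ
  set m := RingHom.ker (eval p) with hm
  set E : Derivation K (MvPolynomial σ K) (MvPolynomial σ K) :=
    mkDerivation K fun i => X i - C (p i)
  have hX (i : σ) : X i - C (p i) ∈ m := by simp [m]
  have hE (i : σ) : E (X i - C (p i)) = X i - C (p i) := by simp [E]
  have hmem (a) : E a ∈ m := by
    rw [derivation_eq_sum_pderiv]
    exact sum_mem fun i _ => Ideal.mul_mem_right _ _ (by simpa [E] using hX i)
  refine ⟨hmem, fun x hx => ?_, fun x hx => by simp_all⟩
  rw [bot_sup_eq]
  rw [hm, ker_eval_eq_span_range_X_sub_C] at hx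
  obtain ⟨a, rfl⟩ := Ideal.mem_span_range_iff_exists_fun.mp hx
  have hleibniz : E (∑ i, a i * (X i - C (p i))) - ∑ i, a i * (X i - C (p i)) =
      ∑ i, (X i - C (p i)) * E (a i) := by
    simp only [map_sum, Derivation.leibniz, hE, smul_eq_mul, Finset.sum_add_distrib,
      add_sub_cancel_left]
  rw [hleibniz]
  exact sum_mem fun i _ => pow_two m ▸ Ideal.mul_mem_mul (hX i) (hmem (a i))

theorem exists_isEulerDerivation [Field K] {ι : Type*} [Finite ι] (p : σ → K)
    {g : ι → MvPolynomial σ K} (hg : ∀ k, eval p (g k) = 0)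
    (hind : LinearIndependent K fun k => gradAt p (g k)) :
    ∃ E : Derivation K (MvPolynomial σ K) (MvPolynomial σ K),
      IsEulerDerivation (RingHom.ker (eval p)) (Ideal.span (Set.range g)) E := by
  classical
  cases nonempty_fintype σ
  cases nonempty_fintype ι
  let M : Matrix ι σ K := Matrix.of fun k => gradAt p (g k)
  obtain ⟨U, hU⟩ : ∃ U : Matrix σ ι K, M * U = 1 := by
    have hM : M.rank = Fintype.card ι := LinearIndependent.rank_matrix hind
    exact Matrix.mulVec_surjective_iff_exists_right_inverse.mp <| LinearMap.range_eq_top.mp <|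
      Submodule.eq_top_of_finrank_eq (hM.trans (Module.finrank_fintype_fun_eq_card K).symm)
  let η (j : ι) := mkDerivation K fun i => (C (U i j) : MvPolynomial σ K)
  have hηg : (Matrix.of fun k j => η j (g k)).map (eval p) = 1 := by
    ext k j
    rw [← hU, Matrix.map_apply, Matrix.of_apply, derivation_eq_sum_pderiv, map_sum,
      Matrix.mul_apply]
    simp [η, M, gradAt, mul_comm]
  refine ⟨_, (isEulerDerivation_mkDerivation_X_sub_C p).tangentCorrection hg η ?_⟩
  rw [RingHom.mem_ker, map_sub, RingHom.map_det, RingHom.mapMatrix_apply, hηg]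
  simp

/-- Subspaces of polynomials having the closure properties of `Δ_p(F)`: the elements vanish at `p`,
and the subspace contains each partial derivative of its elements that vanishes at `p`. -/
structure IsPDerivClosedAt [CommRing K] (p : σ → K) (L : Submodule K (MvPolynomial σ K)) :
    Prop where
  eval_eq_zero : ∀ h ∈ L, eval p h = 0
  pderiv_mem : ∀ h ∈ L, ∀ i, eval p (pderiv i h) = 0 → pderiv i h ∈ L

namespace IsPDerivClosedAt

variable [Field K] {p : σ → K} {L : Submodule K (MvPolynomial σ K)}

theorem span_le_sup_pow [CharZero K] (hL : IsPDerivClosedAt p L) {s : Set (MvPolynomial σ K)}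
    (hsL : s ⊆ L) (hspan : L.map (gradAt p) ≤ (Submodule.span K s).map (gradAt p))
    {E : Derivation K (MvPolynomial σ K) (MvPolynomial σ K)}
    (hE : IsEulerDerivation (RingHom.ker (eval p)) (Ideal.span s) E) (N : ℕ) :
    Ideal.span (L : Set (MvPolynomial σ K)) ≤ Ideal.span s ⊔ RingHom.ker (eval p) ^ N := by
  cases nonempty_fintype σ
  set m := RingHom.ker (eval p)
  set J := Ideal.span s
  refine Ideal.span_le.mpr ?_
  induction N with
  | zero => simp
  | succ N ih =>
    have hflat (h) (hhL : h ∈ L) (hgrad : gradAt p h = 0) : h ∈ J ⊔ m ^ (N + 1) := by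
      obtain rfl | hN := N.eq_zero_or_pos
      · exact Ideal.mem_sup_right (by simpa [m] using hL.eval_eq_zero h hhL)
      refine hE.mem_sup_pow_succ_of_apply_mem ?_ (ih hhL) ?_
      · simpa using (Nat.cast_ne_zero.mpr hN.ne' : (N : K) ≠ 0).isUnit.map C
      rw [derivation_eq_sum_pderiv, add_comm N]
      exact sum_mem fun i _ => mul_mem_sup_pow_add (by simpa using hE.apply_mem (X i)) <|
        ih (hL.pderiv_mem h hhL i (congr_fun hgrad i))
    intro h hhL
    obtain ⟨u, hus, hgradu⟩ := hspan (Submodule.mem_map_of_mem hhL)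
    have huL : u ∈ L := Submodule.span_le.mpr hsL hus
    have huJ : u ∈ J := Submodule.span_subset_span K _ s hus
    simpa only [sub_add_cancel, SetLike.mem_coe] using add_mem
      (hflat (h - u) (sub_mem hhL huL) (by rw [map_sub, hgradu, sub_self]))
      (Ideal.mem_sup_left huJ)

theorem natCard_le_ringKrullDim_add_finrank [CharZero K] (hL : IsPDerivClosedAt p L) :
    (Nat.card σ : WithBot ℕ∞) ≤
      ringKrullDim (MvPolynomial σ K ⧸ Ideal.span (L : Set (MvPolynomial σ K))) +
        Module.finrank K (L.map (gradAt p)) := by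
  obtain ⟨g, hgL, hind, hspan⟩ := exists_fun_fin_finrank_map (gradAt p) L
  obtain ⟨E, hE⟩ := exists_isEulerDerivation p (fun k => hL.eval_eq_zero _ (hgL k)) hind
  have hgL' : Set.range g ⊆ L := Set.range_subset_iff.mpr hgL
  have hmax := isMaximal_ker_eval p
  have hker : Ideal.span (L : Set (MvPolynomial σ K)) ≤ RingHom.ker (eval p) :=
    Ideal.span_le.mpr fun h hh => RingHom.mem_ker.mpr (hL.eval_eq_zero h hh)
  have hcard : (Set.range g).encard ≤ Module.finrank K (L.map (gradAt p)) := by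
    simpa [← Set.image_univ] using Set.encard_image_le g Set.univ
  calc (Nat.card σ : WithBot ℕ∞) = (RingHom.ker (eval p)).height := by
        rw [height_eq_natCard_of_isMaximal]; rfl
    _ ≤ ringKrullDim (MvPolynomial σ K ⧸ Ideal.span (L : Set (MvPolynomial σ K))) +
          (Set.range g).encard :=
        height_le_ringKrullDim_quotient_add_encard hker _ (hgL'.trans Ideal.subset_span)
          fun x hx => exists_notMem_mul_mem_of_forall_mem_sup_pow hmax.ne_top
            fun N => hL.span_le_sup_pow hgL' hspan.le hE N hx
    _ ≤ ringKrullDim (MvPolynomial σ K ⧸ Ideal.span (L : Set (MvPolynomial σ K))) +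
          Module.finrank K (L.map (gradAt p)) := by
        gcongr
        exact_mod_cast hcard

end IsPDerivClosedAt

end Polynomial

section DeltaSet

variable {n : ℕ} {F : Set (MvPolynomial (Fin n) ℂ)} {p : Fin n → ℂ}

theorem DeltaSet.eval_eq_zero (hF : ∀ f ∈ F, eval p f = 0) {h : MvPolynomial (Fin n) ℂ}
    (hh : DeltaSet F p h) : eval p h = 0 := by
  induction hh with
  | base hf => exact hF _ hf
  | smul a _ _ ih => rw [map_mul, ih, mul_zero]
  | add _ _ hsum => rwa [map_add]
  | deriv _ _ hz => exact hz

theorem DeltaSet.totalDegree_le {m : ℕ} (hF : ∀ f ∈ F, f.totalDegree ≤ m)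
    {h : MvPolynomial (Fin n) ℂ} (hh : DeltaSet F p h) : h.totalDegree ≤ m := by
  induction hh with
  | base hf => exact hF _ hf
  | smul a _ _ ih => exact smul_eq_C_mul _ a ▸ (totalDegree_smul_le _ _).trans ih
  | add _ _ _ ih₁ ih₂ => exact (totalDegree_add _ _).trans (max_le ih₁ ih₂)
  | deriv i _ _ ih => exact (totalDegree_pderiv_le i _).trans ih

theorem DeltaSet.of_mem_span (hF : ∀ f ∈ F, eval p f = 0) {h : MvPolynomial (Fin n) ℂ}
    (hh : h ∈ Submodule.span ℂ {h | DeltaSet F p h}) (h0 : h ≠ 0) : DeltaSet F p h := by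
  suffices DeltaSet F p h ∨ h = 0 from this.resolve_right h0
  clear h0
  induction hh using Submodule.span_induction with
  | mem h hh => exact .inl hh
  | zero => exact .inr rfl
  | add h₁ h₂ _ _ ih₁ ih₂ =>
    obtain ih₁ | rfl := ih₁
    · obtain ih₂ | rfl := ih₂
      · exact .inl (ih₁.add ih₂ (by rw [ih₁.eval_eq_zero hF, ih₂.eval_eq_zero hF, add_zero]))
      · exact .inl (by rwa [add_zero])
    · rwa [zero_add]
  | smul a h _ ih =>
    obtain ih | rfl := ih
    · obtain rfl | ha := eq_or_ne a 0
      · exact .inr (zero_smul ℂ h)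
      · exact .inl (smul_eq_C_mul h a ▸ ih.smul a ha)
    · exact .inr (smul_zero a)

theorem isPDerivClosedAt_span_deltaSet (hF : ∀ f ∈ F, eval p f = 0) :
    IsPDerivClosedAt p (Submodule.span ℂ {h | DeltaSet F p h}) where
  eval_eq_zero h hh := by
    obtain rfl | h0 := eq_or_ne h 0
    · exact map_zero _
    · exact (DeltaSet.of_mem_span hF hh h0).eval_eq_zero hF
  pderiv_mem h hh i hz := by
    obtain rfl | h0 := eq_or_ne h 0
    · simp
    · exact Submodule.subset_span ((DeltaSet.of_mem_span hF hh h0).deriv i hz)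

theorem lt_finrank_map_gradAt_span_deltaSet (hF : ∀ f ∈ F, eval p f = 0) {s : ℕ}
    (hdim : ringKrullDim (MvPolynomial (Fin n) ℂ ⧸ Ideal.span F) < ((n - s : ℕ) : WithBot ℕ∞)) :
    s < Module.finrank ℂ ((Submodule.span ℂ {h | DeltaSet F p h}).map (gradAt p)) := by
  have hle : Ideal.span F ≤ Ideal.span (Submodule.span ℂ {h | DeltaSet F p h} : Set _) :=
    Ideal.span_mono fun f hf => Submodule.subset_span (DeltaSet.base hf)
  have hbound := (isPDerivClosedAt_span_deltaSet hF).natCard_le_ringKrullDim_add_finrank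
  rw [Nat.card_fin] at hbound
  exact lt_of_natCast_le_add_of_lt_natCast_sub hbound <|
    (ringKrullDim_le_of_surjective _ (Ideal.Quotient.factor_surjective hle)).trans_lt hdim

end DeltaSet

theorem deflation_step_exists_general {n s m : ℕ} (F : Set (MvPolynomial (Fin n) ℂ))
    (p : Fin n → ℂ) (hp : ∀ f ∈ F, eval p f = 0)
    (hdim : ringKrullDim (MvPolynomial (Fin n) ℂ ⧸ Ideal.span F) < ((n - s : ℕ) : WithBot ℕ∞))
    (hm : ∀ f ∈ F, f.totalDegree ≤ m) :
    ∃ f' : Fin (s + 1) → MvPolynomial (Fin n) ℂ,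
      (∀ j, DeltaSet F p (f' j)) ∧ jacRank f' p = s + 1 ∧ ∀ j, (f' j).totalDegree ≤ m := by
  obtain ⟨g, hgL, hind, -⟩ :=
    exists_fun_fin_finrank_map (gradAt p) (Submodule.span ℂ {h | DeltaSet F p h})
  let f' : Fin (s + 1) → MvPolynomial (Fin n) ℂ :=
    g ∘ Fin.castLE (lt_finrank_map_gradAt_span_deltaSet hp hdim)
  have hind' : LinearIndependent ℂ fun j => gradAt p (f' j) :=
    hind.comp _ (Fin.castLE_injective _)
  have hf' (j) : DeltaSet F p (f' j) :=
    .of_mem_span hp (hgL _) fun h0 => hind'.ne_zero j (by rw [h0, map_zero])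
  exact ⟨f', hf', (LinearIndependent.rank_matrix hind').trans (Fintype.card_fin _),
    fun j => (hf' j).totalDegree_le hm⟩

/-- Let `F = {f₁,…,f_s,f_{s+1},…,f_{s+k}} ⊂ ℂ[x₁,…,xₙ]` with `k ≥ 1`, and
let `p ∈ ℂⁿ` satisfy `fᵢ(p) = 0` for all `i` and `rank J(F)(p) = s`. Assume the Krull
dimension of `ℂ[x]/⟨F⟩` is at most `n − s − 1` (i.e. `< n − s`) and `m = maxᵢ deg fᵢ > 1`.
Then there are polynomials `f′₁,…,f′_{s+1} ∈ Δ_p(F)` with `rank J(f′)(p) = s + 1` and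
`maxⱼ deg f′ⱼ ≤ m`. -/
theorem deflation_step_exists {n s k : ℕ} (hk : 1 ≤ k)
    (f : Fin (s + k) → MvPolynomial (Fin n) ℂ) (p : Fin n → ℂ)
    (hp : ∀ i, eval p (f i) = 0)
    (hrank : jacRank f p = s)
    (hdim : ringKrullDim (MvPolynomial (Fin n) ℂ ⧸ Ideal.span (Set.range f)) <
      ((n - s : ℕ) : WithBot ℕ∞))
    (hm : 1 < Finset.univ.sup fun i => (f i).totalDegree) :
    ∃ f' : Fin (s + 1) → MvPolynomial (Fin n) ℂ,
      (∀ j, DeltaSet (Set.range f) p (f' j)) ∧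
      jacRank f' p = s + 1 ∧
      ∀ j, (f' j).totalDegree ≤ Finset.univ.sup fun i => (f i).totalDegree := by
  exact deflation_step_exists_general (Set.range f) p (Set.forall_mem_range.mpr hp) hdim
    (Set.forall_mem_range.mpr fun i => Finset.le_sup (f := fun i => (f i).totalDegree)
      (Finset.mem_univ i))
end

section
/- Let F = {f₁,…,fₙ} ⊂ ℂ[x₁,…,xₙ] be a polynomial system with an isolated singular zero p ∈ ℂⁿ, and let λ = (λ₁,…,λₙ) ∈ ℂⁿ be a nonzero vector with J(F)(p)·λᵀ = 0. Define G = {λ₁ ∂f_i/∂x₁ + ⋯ + λₙ ∂f_i/∂xₙ : i = 1,…,n}. Then the multiplicity of p as a zero of the augmented system F ∪ G is strictly smaller than the multiplicity of p as a zero of F. -/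
open MvPolynomial

/-- The image in `ℂ[x]/⟨H⟩` of the maximal ideal `⟨x₁ − p₁,…,xₙ − pₙ⟩` of the point `p`. -/
noncomputable def maxIdealAt {n : ℕ} (H : Set (MvPolynomial (Fin n) ℂ)) (p : Fin n → ℂ) :
    Ideal (MvPolynomial (Fin n) ℂ ⧸ Ideal.span H) :=
  Ideal.map (Ideal.Quotient.mk (Ideal.span H))
    (Ideal.span (Set.range fun i : Fin n => X i - C (p i)))

open Classical in
/-- The multiplicity of `p` as a zero of the polynomial system `H`: the ℂ-vector-space
dimension of the localization of `ℂ[x₁,…,xₙ]/⟨H⟩` at the maximal ideal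
`⟨x₁ − p₁,…,xₙ − pₙ⟩` (and `0` in the degenerate case where this ideal is not prime,
which cannot happen when `p` is an isolated zero of `H`). -/
noncomputable def zeroMultiplicity {n : ℕ} (H : Set (MvPolynomial (Fin n) ℂ))
    (p : Fin n → ℂ) : ℕ :=
  if h : (maxIdealAt H p).IsPrime then
    haveI := h
    Module.finrank ℂ (Localization.AtPrime (maxIdealAt H p))
  else 0

/-!
An irreducible variety of positive dimension over `ℂ` has no isolated points: project it finitely
onto an affine space (Noether normalization) and use the continuity of roots. Hence the point ideal
of an isolated zero `p` of `F` is minimal over `F`, and the local ring `𝒪` of `F` at `p` is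
finite-dimensional, of dimension the multiplicity. Let `D = ∑ λⱼ ∂/∂xⱼ`. If every `D fᵢ` vanished
in `𝒪`, then `D` would descend to `𝒪`; but an affine function `l` with `l(p) = 0` and `D l` a unit
is nilpotent in `𝒪`, and differentiating `l ^ (k + 1) = 0` gives `l ^ k = 0`, down to `1 = 0`. So
some `D fᵢ` is nonzero in `𝒪`, and the local ring of the augmented system is a proper quotient of
`𝒪`.
-/

open Filter Topology

section ContinuityOfRoots

variable {K : Type*} [NormedField K] {σ : Type*}

theorem eventually_norm_coeff_map_eval_sub_lt (h : Polynomial (MvPolynomial σ K)) (y₀ : σ → K)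
    {δ : ℝ} (hδ : 0 < δ) :
    ∀ᶠ y in 𝓝 y₀, ∀ i, ‖(h.map (eval y)).coeff i - (h.map (eval y₀)).coeff i‖ < δ := by
  have hsupport : ∀ᶠ y in 𝓝 y₀, ∀ i ∈ h.support,
      ‖eval y (h.coeff i) - eval y₀ (h.coeff i)‖ < δ := by
    refine (eventually_all_finset _).2 fun i _ => ?_
    simpa only [dist_eq_norm] using
      Metric.tendsto_nhds.1 ((MvPolynomial.continuous_eval (h.coeff i)).tendsto y₀) δ hδ
  filter_upwards [hsupport] with y hy i
  by_cases hi : i ∈ h.support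
  · simpa only [Polynomial.coeff_map] using hy i hi
  · simpa [Polynomial.notMem_support_iff.1 hi] using hδ

variable [IsAlgClosed K]

theorem exists_isRoot_norm_sub_lt_mul_max {f g : Polynomial K} (hf : f.Monic) (hg : g.Monic)
    (hdeg : g.natDegree = f.natDegree) {η : ℝ} (hη : 0 < η)
    (hcoeff : ∀ i, ‖g.coeff i - f.coeff i‖ < η ^ f.natDegree / (f.natDegree + 1))
    {a : K} (ha : f.IsRoot a) : ∃ b, g.IsRoot b ∧ ‖a - b‖ < η * max ‖a‖ 1 := by
  have hdeg_ne : f.natDegree ≠ 0 := fun h0 => by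
    simp [(Polynomial.Monic.natDegree_eq_zero hf).1 h0] at ha
  obtain ⟨b, hb, hab⟩ := Polynomial.exists_roots_norm_sub_lt_of_norm_coeff_sub_lt
    (by positivity) ha hf hg hdeg hcoeff (IsAlgClosed.splits g)
  refine ⟨b, Polynomial.isRoot_of_mem_roots hb, ?_⟩
  rwa [mul_div_cancel₀ _ (by positivity), Real.pow_rpow_inv_natCast hη.le hdeg_ne] at hab

variable {h : Polynomial (MvPolynomial σ K)}

theorem eventually_exists_isRoot_map_eval_norm_sub_lt (hh : h.Monic) {y₀ : σ → K} {a : K}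
    (ha : (h.map (eval y₀)).IsRoot a) {ε : ℝ} (hε : 0 < ε) :
    ∀ᶠ y in 𝓝 y₀, ∃ b, (h.map (eval y)).IsRoot b ∧ ‖a - b‖ < ε := by
  have hη : 0 < ε / max ‖a‖ 1 := by positivity
  filter_upwards [eventually_norm_coeff_map_eval_sub_lt h y₀
    (δ := (ε / max ‖a‖ 1) ^ h.natDegree / (h.natDegree + 1)) (by positivity)] with y hy
  obtain ⟨b, hb, hab⟩ := exists_isRoot_norm_sub_lt_mul_max (hh.map (eval y₀)) (hh.map (eval y))
    (by simp only [hh.natDegree_map]) hη (by simpa only [hh.natDegree_map] using hy) ha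
  exact ⟨b, hb, by rwa [div_mul_cancel₀ _ (by positivity)] at hab⟩

theorem eventually_forall_isRoot_map_eval_exists_norm_sub_lt (hh : h.Monic) (y₀ : σ → K)
    {ε : ℝ} (hε : 0 < ε) :
    ∀ᶠ y in 𝓝 y₀, ∀ a, (h.map (eval y)).IsRoot a →
      ∃ b, (h.map (eval y₀)).IsRoot b ∧ ‖a - b‖ < ε := by
  have hroots : {b | (h.map (eval y₀)).IsRoot b}.Finite :=
    Polynomial.finite_setOfPred_isRoot (hh.map _).ne_zero
  obtain ⟨M, hM⟩ := (hroots.image norm).bddAbove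
  set R : ℝ := max M 1
  -- `max ‖a‖ 1 ≤ 2 * R` as soon as `‖a - b‖ ≤ max ‖a‖ 1 / 2` for a root `b` at `y₀`.
  set η : ℝ := min (1 / 2) (ε / (2 * R))
  have hR : 0 < R := by positivity
  have hη : 0 < η := by positivity
  filter_upwards [eventually_norm_coeff_map_eval_sub_lt h y₀
    (δ := η ^ h.natDegree / (h.natDegree + 1)) (by positivity)] with y hy a ha
  obtain ⟨b, hb, hab⟩ := exists_isRoot_norm_sub_lt_mul_max (hh.map (eval y)) (hh.map (eval y₀))
    (by simp only [hh.natDegree_map]) hη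
    (by simpa only [hh.natDegree_map, norm_sub_rev] using hy) ha
  have hbM : ‖b‖ ≤ M := hM ⟨b, hb, rfl⟩
  have hmax : max ‖a‖ 1 ≤ 2 * R := by
    have h_half : η * max ‖a‖ 1 ≤ 1 / 2 * max ‖a‖ 1 := by gcongr; exact min_le_left _ _
    have h_norm : ‖a‖ ≤ ‖b‖ + ‖a - b‖ := by linarith [norm_le_norm_add_norm_sub' a b]
    rcases max_cases ‖a‖ 1 with h | h <;>
      linarith [le_max_left M 1, le_max_right M 1]
  refine ⟨b, hb, hab.trans_le ?_⟩
  calc η * max ‖a‖ 1 ≤ ε / (2 * R) * (2 * R) := by gcongr; exact min_le_right _ _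
    _ = ε := div_mul_cancel₀ _ (by positivity)

end ContinuityOfRoots

section Lifting

variable {A B k : Type*} [CommRing A] [CommRing B] [Algebra A B] [Algebra.IsIntegral A B]
  [Field k] [IsAlgClosed k]

theorem exists_ringHom_comp_algebraMap_eq (φ : A →+* k)
    (hφ : RingHom.ker (algebraMap A B) ≤ RingHom.ker φ) :
    ∃ ψ : B →+* k, ψ.comp (algebraMap A B) = φ := by
  have : (RingHom.ker φ).IsPrime := RingHom.ker_isPrime φ
  obtain ⟨Q, -, hQ, hQφ⟩ := Ideal.exists_ideal_over_prime_of_isIntegral (RingHom.ker φ)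
    (⊥ : Ideal B) hφ
  have : Q.LiesOver (RingHom.ker φ) := ⟨hQφ.symm⟩
  let := (RingHom.kerLift φ).toAlgebra
  have : Module.IsTorsionFree (A ⧸ RingHom.ker φ) k :=
    Module.isTorsionFree_iff_algebraMap_injective.2 (RingHom.kerLift_injective φ)
  have : Module.IsTorsionFree (A ⧸ RingHom.ker φ) (B ⧸ Q) :=
    Module.isTorsionFree_iff_faithfulSMul.2 inferInstance
  let lift : B ⧸ Q →ₐ[A ⧸ RingHom.ker φ] k := IsAlgClosed.lift
  refine ⟨(lift : B ⧸ Q →+* k).comp (Ideal.Quotient.mk Q), RingHom.ext fun a => ?_⟩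
  exact lift.commutes (Ideal.Quotient.mk _ a)

theorem exists_ringHom_comp_algebraMap_eq_and_apply_eq [IsIntegrallyClosed A] [IsDomain A]
    [IsDomain B] [FaithfulSMul A B] (φ : A →+* k) (b : B) {r : k}
    (hr : ((minpoly A b).map φ).IsRoot r) :
    ∃ ψ : B →+* k, ψ.comp (algebraMap A B) = φ ∧ ψ b = r := by
  let := (Polynomial.aeval b : Polynomial A →ₐ[A] B).toAlgebra
  have : IsScalarTower A (Polynomial A) B := .of_algebraMap_eq fun a => by
    simp [RingHom.algebraMap_toAlgebra]
  have : Algebra.IsIntegral (Polynomial A) B := .tower_top A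
  have hker : RingHom.ker (algebraMap (Polynomial A) B) ≤
      RingHom.ker (Polynomial.eval₂RingHom φ r) := by
    intro q hq
    obtain ⟨c, rfl⟩ := minpoly.isIntegrallyClosed_dvd (Algebra.IsIntegral.isIntegral b) hq
    rw [RingHom.mem_ker, map_mul, Polynomial.coe_eval₂RingHom, Polynomial.eval₂_eq_eval_map φ,
      hr.eq_zero, zero_mul]
  obtain ⟨ψ, hψ⟩ := exists_ringHom_comp_algebraMap_eq _ hker
  refine ⟨ψ, RingHom.ext fun a => ?_, ?_⟩
  · simpa [RingHom.algebraMap_toAlgebra] using RingHom.congr_fun hψ (Polynomial.C a)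
  · simpa [RingHom.algebraMap_toAlgebra] using RingHom.congr_fun hψ Polynomial.X

end Lifting

theorem exists_eval_eq_one_and_forall_eval_eq_zero {σ K : Type*} [Field K] {S : Set (σ → K)}
    (hS : S.Finite) (p : σ → K) :
    ∃ w : MvPolynomial σ K, eval p w = 1 ∧ ∀ q ∈ S, q ≠ p → eval q w = 0 := by
  classical
  have hsep : ∀ q, ∃ v : MvPolynomial σ K, eval q v = 0 ∧ (q ≠ p → eval p v = 1) := by
    intro q
    by_cases hqp : q = p
    · exact ⟨0, map_zero _, fun hne => absurd hqp hne⟩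
    · obtain ⟨i, hi⟩ := Function.ne_iff.1 hqp
      exact ⟨C (p i - q i)⁻¹ * (X i - C (q i)), by simp,
        fun _ => by simpa using inv_mul_cancel₀ (sub_ne_zero.2 hi.symm)⟩
  choose v hv_zero hv_one using hsep
  refine ⟨∏ q ∈ hS.toFinset.erase p, v q, ?_, fun q hq hqp => ?_⟩
  · rw [map_prod]
    exact Finset.prod_eq_one fun q hq => hv_one q (Finset.ne_of_mem_erase hq)
  · rw [map_prod]
    exact Finset.prod_eq_zero (Finset.mem_erase.2 ⟨hqp, hS.mem_toFinset.2 hq⟩) (hv_zero q)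

theorem exists_eval_eq_one_and_forall_mem_thickening {σ K : Type*} [NormedField K] [Fintype σ]
    {S : Set (σ → K)} (hS : S.Finite) {p : σ → K} {U : Set (σ → K)} (hU : U ∈ 𝓝 p) :
    ∃ w : MvPolynomial σ K, eval p w = 1 ∧
      ∃ δ > 0, ∀ t ∈ Metric.thickening δ S, 1 / 2 ≤ ‖eval t w‖ → t ∈ U := by
  obtain ⟨w, hw_one, hw_zero⟩ := exists_eval_eq_one_and_forall_eval_eq_zero hS p
  have hsmall : IsOpen {t | ‖eval t w‖ < 1 / 2} :=
    isOpen_lt (MvPolynomial.continuous_eval w).norm continuous_const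
  have hcover : S ⊆ {t | ‖eval t w‖ < 1 / 2} ∪ interior U := fun s hs => by
    by_cases hsp : s = p
    · exact Or.inr (hsp ▸ mem_interior_iff_mem_nhds.2 hU)
    · exact Or.inl (by simp [hw_zero s hs hsp])
  obtain ⟨δ, hδ, hSδ⟩ :=
    hS.isCompact.exists_thickening_subset_open (hsmall.union isOpen_interior) hcover
  exact ⟨w, hw_one, δ, hδ, fun t ht hwt =>
    interior_subset ((hSδ ht).resolve_left hwt.not_gt)⟩

theorem isRoot_map_minpoly {A B k : Type*} [CommRing A] [CommRing B] [Algebra A B] [CommRing k]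
    {χ : B →+* k} {φ : A →+* k} (hχ : χ.comp (algebraMap A B) = φ) (b : B) :
    ((minpoly A b).map φ).IsRoot (χ b) := by
  rw [Polynomial.IsRoot, Polynomial.eval_map, ← hχ, ← Polynomial.hom_eval₂,
    ← Polynomial.aeval_def, minpoly.aeval, map_zero]

theorem eventually_exists_ringHom_comp_algebraMap_eq_eval {K σ B : Type*}
    [NormedField K] [IsAlgClosed K] [CommRing B] [IsDomain B] [Algebra (MvPolynomial σ K) B]
    [Algebra.IsIntegral (MvPolynomial σ K) B] [FaithfulSMul (MvPolynomial σ K) B]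
    {χ₀ : B →+* K} {y₀ : σ → K} (hχ₀ : χ₀.comp (algebraMap (MvPolynomial σ K) B) = eval y₀)
    {ι : Type*} [Finite ι] (b : ι → B) {U : Set (ι → K)} (hU : U ∈ 𝓝 fun i => χ₀ (b i)) :
    ∀ᶠ y in 𝓝 y₀, ∃ χ : B →+* K,
      χ.comp (algebraMap (MvPolynomial σ K) B) = eval y ∧ (fun i => χ (b i)) ∈ U := by
  cases nonempty_fintype ι
  set A := MvPolynomial σ K
  have hmonic (c : B) : (minpoly A c).Monic := minpoly.monic (Algebra.IsIntegral.isIntegral c)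
  set S : Set (ι → K) := {s | ∀ i, ((minpoly A (b i)).map (eval y₀)).IsRoot (s i)}
  have hS : S.Finite := Set.Finite.pi' fun i =>
    Polynomial.finite_setOfPred_isRoot ((hmonic (b i)).map _).ne_zero
  -- Roots of `minpoly A (b i)` over `y` lie near those over `y₀`, so every lift `χ` of `eval y` has
  -- `χ ∘ b` near `S`; the separating element `u` excludes the points of `S` other than `χ₀ ∘ b`.
  obtain ⟨w, hw_one, δ, hδ, hδU⟩ := exists_eval_eq_one_and_forall_mem_thickening hS hU
  set u : B := eval₂ ((algebraMap A B).comp C) b w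
  have heval_C (y : σ → K) : (eval y).comp C = RingHom.id K := RingHom.ext fun c => eval_C c
  have hχu {χ : B →+* K} {y : σ → K} (hχ : χ.comp (algebraMap A B) = eval y) :
      χ u = eval (fun i => χ (b i)) w := by
    rw [hom_eval₂, ← RingHom.comp_assoc, hχ, heval_C, eval₂_id]
  have hu_root : ((minpoly A u).map (eval y₀)).IsRoot 1 := by
    simpa only [hχu hχ₀, hw_one] using isRoot_map_minpoly hχ₀ u
  filter_upwards [eventually_all.2 fun i =>
      eventually_forall_isRoot_map_eval_exists_norm_sub_lt (hmonic (b i)) y₀ hδ,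
    eventually_exists_isRoot_map_eval_norm_sub_lt (hmonic u) hu_root one_half_pos] with y hb hu
  obtain ⟨r, hr, hr_near⟩ := hu
  obtain ⟨χ, hχ, rfl⟩ := exists_ringHom_comp_algebraMap_eq_and_apply_eq (eval y) u hr
  choose s hsS hs_near using fun i => hb i _ (isRoot_map_minpoly hχ (b i))
  refine ⟨χ, hχ, hδU _ (Metric.mem_thickening_iff.2 ⟨s, hsS, (dist_pi_lt_iff hδ).2 fun i => ?_⟩) ?_⟩
  · simpa only [dist_eq_norm] using hs_near i
  · have hnorm := norm_le_norm_add_norm_sub' 1 (χ u)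
    rw [norm_one] at hnorm
    rw [← hχu hχ]
    linarith

theorem accPt_zeroLocus_of_not_isMaximal {K σ : Type*} [NontriviallyNormedField K] [IsAlgClosed K]
    [Finite σ] (P : Ideal (MvPolynomial σ K)) [P.IsPrime] (hP : ¬P.IsMaximal) {p : σ → K}
    (hp : p ∈ zeroLocus K P) : AccPt p (𝓟 (zeroLocus K P)) := by
  obtain ⟨d, g, hg_inj, hg_int⟩ := exists_integral_inj_algHom_of_fg K (MvPolynomial σ K ⧸ P)
  let := (g : MvPolynomial (Fin d) K →+* MvPolynomial σ K ⧸ P).toAlgebra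
  have : Algebra.IsIntegral (MvPolynomial (Fin d) K) (MvPolynomial σ K ⧸ P) := ⟨hg_int⟩
  have : FaithfulSMul (MvPolynomial (Fin d) K) (MvPolynomial σ K ⧸ P) :=
    (faithfulSMul_iff_algebraMap_injective _ _).2 hg_inj
  have : Nonempty (Fin d) := by
    by_contra! hd
    have hfield : IsField (MvPolynomial (Fin d) K) :=
      (MvPolynomial.isEmptyRingEquiv K (Fin d)).toMulEquiv.isField (Field.toIsField K)
    exact hP (Ideal.Quotient.maximal_of_isField P (isField_of_isIntegral_of_isField' hfield))
  let χ₀ : MvPolynomial σ K ⧸ P →+* K := Ideal.Quotient.lift P (eval p) hp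
  have hχ₀_mk (a : MvPolynomial σ K) : χ₀ (Ideal.Quotient.mk P a) = eval p a := rfl
  let y₀ : Fin d → K := fun j => χ₀ (g (X j))
  have hconst (c : K) : g (C c) = Ideal.Quotient.mk P (C c) := g.commutes c
  have hχ₀ : χ₀.comp (algebraMap (MvPolynomial (Fin d) K) _) = eval y₀ :=
    ringHom_ext (fun c => by simp [RingHom.algebraMap_toAlgebra, hconst, hχ₀_mk])
      fun j => by simp [RingHom.algebraMap_toAlgebra, y₀]
  refine accPt_iff_nhds.2 fun U hU => ?_
  have hnear := eventually_exists_ringHom_comp_algebraMap_eq_eval hχ₀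
    (fun i => Ideal.Quotient.mk P (X i)) (U := U) (by simpa [hχ₀_mk] using hU)
  have := Module.punctured_nhds_neBot K (Fin d → K) y₀
  obtain ⟨y, ⟨χ, hχ, hχU⟩, hy⟩ := ((hnear.filter_mono nhdsWithin_le_nhds).and
    (self_mem_nhdsWithin : {y₀}ᶜ ∈ 𝓝[≠] y₀)).exists
  have hχ_mk (a : MvPolynomial σ K) :
      χ (Ideal.Quotient.mk P a) = eval (fun i => χ (Ideal.Quotient.mk P (X i))) a := by
    refine RingHom.congr_fun (f := χ.comp (Ideal.Quotient.mk P)) (ringHom_ext (fun c => ?_) ?_) a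
    · simpa [RingHom.algebraMap_toAlgebra, hconst] using RingHom.congr_fun hχ (C c)
    · simp
  refine ⟨fun i => χ (Ideal.Quotient.mk P (X i)), ⟨hχU, fun a ha => ?_⟩, fun hq => hy ?_⟩
  · rw [aeval_eq_eval, ← hχ_mk, Ideal.Quotient.eq_zero_iff_mem.2 ha, map_zero]
  · have hχχ₀ : χ = χ₀ := Ideal.Quotient.ringHom_ext <| RingHom.ext fun a =>
      (hχ_mk a).trans (by rw [hq]; exact (hχ₀_mk a).symm)
    funext j
    simpa [RingHom.algebraMap_toAlgebra, hχχ₀, y₀] using (RingHom.congr_fun hχ (X j)).symm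

theorem ker_eval_mem_minimalPrimes_of_not_accPt {K σ : Type*} [NontriviallyNormedField K]
    [IsAlgClosed K] [Finite σ] {I : Ideal (MvPolynomial σ K)} {p : σ → K}
    (hp : p ∈ zeroLocus K I) (hacc : ¬AccPt p (𝓟 (zeroLocus K I))) :
    RingHom.ker (eval p) ∈ I.minimalPrimes := by
  refine ⟨⟨RingHom.ker_isPrime _, hp⟩, fun P ⟨hP, hIP⟩ hPp => ?_⟩
  by_cases hmax : P.IsMaximal
  · exact (hmax.eq_of_le (RingHom.ker_ne_top _) hPp).ge
  · exact absurd ((accPt_zeroLocus_of_not_isMaximal P hmax hPp).mono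
      (principal_mono.2 (zeroLocus_anti_mono hIP))) hacc

theorem mem_zeroLocus_span_iff {σ K : Type*} [Field K] {H : Set (MvPolynomial σ K)} {p : σ → K} :
    p ∈ zeroLocus K (Ideal.span H) ↔ ∀ h ∈ H, eval p h = 0 := by
  rw [zeroLocus_span]
  simp [aeval_eq_eval]

theorem not_accPt_zeroLocus_span_range {σ K ι : Type*} [NormedField K] [Fintype σ]
    {f : ι → MvPolynomial σ K} {p : σ → K}
    (hisolated : ∃ ε > 0, ∀ y : σ → K, dist y p < ε → (∀ i, eval y (f i) = 0) → y = p) :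
    ¬AccPt p (𝓟 (zeroLocus K (Ideal.span (Set.range f)))) := by
  obtain ⟨ε, hε, hunique⟩ := hisolated
  intro hacc
  obtain ⟨y, ⟨hy_ball, hy⟩, hyp⟩ := accPt_iff_nhds.1 hacc _ (Metric.ball_mem_nhds p hε)
  exact hyp (hunique y hy_ball (Set.forall_mem_range.1 (mem_zeroLocus_span_iff.1 hy)))

theorem finite_localization_atPrime_of_mem_minimalPrimes (K : Type*) {A : Type*} [Field K]
    [CommRing A] [Algebra K A] [Algebra.FiniteType K A] {m : Ideal A} [m.IsMaximal]
    (hm : m ∈ minimalPrimes A) : Module.Finite K (Localization.AtPrime m) := by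
  have : IsNoetherianRing A := Algebra.FiniteType.isNoetherianRing K A
  have : IsNoetherianRing (Localization.AtPrime m) :=
    IsLocalization.isNoetherianRing m.primeCompl _ inferInstance
  have : IsArtinianRing (Localization.AtPrime m) :=
    isArtinianRing_iff_krullDimLE_zero.2 (.of_isLocalization m hm _)
  have : Module.Finite K (A ⧸ m) := by
    let := Ideal.Quotient.field m
    exact finite_of_finite_type_of_isJacobsonRing K (A ⧸ m)
  let e : (A ⧸ m) ≃ₐ[K]
      Localization.AtPrime m ⧸ IsLocalRing.maximalIdeal (Localization.AtPrime m) :=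
    .ofRingEquiv (f := IsLocalization.AtPrime.equivQuotMaximalIdeal m _) fun _ => rfl
  have : Module.Finite K (Localization.AtPrime m ⧸ Ring.jacobson (Localization.AtPrime m)) := by
    rw [IsLocalRing.ringJacobson_eq_maximalIdeal]
    exact Module.Finite.equiv e.toLinearEquiv
  exact IsSemiprimaryRing.finite_of_isArtinian K (Localization.AtPrime m) _

theorem isNilpotent_of_mem_maximalIdeal (K : Type*) {A : Type*} [Field K] [CommRing A]
    [IsLocalRing A] [Algebra K A] [Module.Finite K A] {a : A}
    (ha : a ∈ IsLocalRing.maximalIdeal A) : IsNilpotent a := by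
  have : IsArtinianRing A := .of_finite K A
  rwa [← Ring.KrullDimLE.nilradical_eq_maximalIdeal] at ha

theorem not_isNilpotent_of_isUnit_map_derivation {k R A : Type*} [CommSemiring k]
    [CommRing R] [Algebra k R] [CommRing A] [Nontrivial A] [IsAddTorsionFree A] (φ : R →+* A)
    (D : Derivation k R R) (hD : ∀ a, φ a = 0 → φ (D a) = 0) {l : R} (hl : IsUnit (φ (D l))) :
    ¬IsNilpotent (φ l) := by
  have hpow (m : ℕ) : φ (l ^ m) ≠ 0 := by
    induction m with
    | zero => simp
    | succ m ih =>
      intro hm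
      have hDm := hD _ hm
      rw [Derivation.leibniz_pow, Nat.add_sub_cancel, map_nsmul, smul_eq_mul, map_mul,
        nsmul_eq_zero_iff_right m.succ_ne_zero, hl.mul_left_eq_zero] at hDm
      exact ih hDm
  rintro ⟨m, hm⟩
  exact hpow m (by rw [map_pow, hm])

theorem finrank_lt_of_surjective_of_not_injective {K V W : Type*} [Field K] [AddCommGroup V]
    [Module K V] [Module.Finite K V] [AddCommGroup W] [Module K W] (f : V →ₗ[K] W)
    (hsurj : Function.Surjective f) (hinj : ¬Function.Injective f) :
    Module.finrank K W < Module.finrank K V := by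
  have : Module.Finite K W := .of_surjective f hsurj
  refine (LinearMap.finrank_le_finrank_of_surjective hsurj).lt_of_ne fun heq => hinj ?_
  exact (LinearMap.injective_iff_surjective_of_finrank_eq_finrank heq.symm).2 hsurj

theorem surjective_localRingHom_of_eq_comap.{u} {A B : Type u} [CommRing A] [CommRing B]
    {I : Ideal A} {J : Ideal B} [I.IsPrime] [J.IsPrime] {f : A →+* B} (hf : Function.Surjective f)
    (hIJ : I = J.comap f) : Function.Surjective (Localization.localRingHom I J f hIJ) := by
  subst hIJ
  exact RingHom.surjective_localRingHom_of_surjective f hf J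

theorem mkDerivation_eq_sum_pderiv {σ R : Type*} [CommSemiring R] [Fintype σ]
    (g : σ → MvPolynomial σ R) (a : MvPolynomial σ R) :
    mkDerivation R g a = ∑ j, g j * pderiv j a := by
  classical
  have hsum (b : MvPolynomial σ R) :
      (∑ j, g j • pderiv j : Derivation R (MvPolynomial σ R) (MvPolynomial σ R)) b =
        ∑ j, g j * pderiv j b := by
    rw [← Derivation.coeFnAddMonoidHom_apply, map_sum, Finset.sum_apply]
    rfl
  rw [← hsum]
  refine DFunLike.congr_fun (derivation_ext fun i => ?_) a
  simp [hsum, mkDerivation_X, pderiv_X, Pi.single_apply]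

theorem ker_eval_eq_span {σ R : Type*} [CommRing R] (p : σ → R) :
    RingHom.ker (eval p) = Ideal.span (Set.range fun i => X i - C (p i)) := by
  refine le_antisymm (fun a ha => ?_) (Ideal.span_le.2 ?_)
  · set m := Ideal.span (Set.range fun i => (X i - C (p i) : MvPolynomial σ R))
    have hX (i : σ) : Ideal.Quotient.mk m (X i) = Ideal.Quotient.mk m (C (p i)) :=
      Ideal.Quotient.eq.2 (Ideal.subset_span ⟨i, rfl⟩)
    have hfactor : ((Ideal.Quotient.mk m).comp C).comp (eval p) = Ideal.Quotient.mk m :=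
      ringHom_ext (fun c => by simp) fun i => by simp [hX]
    rw [← Ideal.Quotient.eq_zero_iff_mem, ← hfactor, RingHom.comp_apply, RingHom.mem_ker.1 ha,
      map_zero]
  · rintro _ ⟨i, rfl⟩
    simp

section LocalRingAt

variable {n : ℕ} {H : Set (MvPolynomial (Fin n) ℂ)} {p : Fin n → ℂ}

theorem isMaximal_maxIdealAt (hp : p ∈ zeroLocus ℂ (Ideal.span H)) :
    (maxIdealAt H p).IsMaximal := by
  rw [maxIdealAt, ← ker_eval_eq_span]
  have : (RingHom.ker (eval p)).IsMaximal :=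
    RingHom.ker_isMaximal_of_surjective _ fun c => ⟨C c, eval_C c⟩
  exact Ideal.IsMaximal.map_of_surjective_of_ker_le Ideal.Quotient.mk_surjective
    (Ideal.mk_ker.trans_le hp)

theorem comap_mk_maxIdealAt [(maxIdealAt H p).IsPrime] :
    (maxIdealAt H p).comap (Ideal.Quotient.mk (Ideal.span H)) = RingHom.ker (eval p) := by
  have hmax : (RingHom.ker (eval p)).IsMaximal :=
    RingHom.ker_isMaximal_of_surjective _ fun c => ⟨C c, eval_C c⟩
  refine (hmax.eq_of_le (Ideal.IsPrime.ne_top inferInstance) ?_).symm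
  rw [maxIdealAt, ← ker_eval_eq_span]
  exact Ideal.le_comap_map

theorem mk_mem_maxIdealAt_iff [(maxIdealAt H p).IsPrime] {a : MvPolynomial (Fin n) ℂ} :
    Ideal.Quotient.mk (Ideal.span H) a ∈ maxIdealAt H p ↔ eval p a = 0 := by
  rw [← Ideal.mem_comap, comap_mk_maxIdealAt, RingHom.mem_ker]

theorem maxIdealAt_mem_minimalPrimes (hp : p ∈ zeroLocus ℂ (Ideal.span H))
    (hacc : ¬AccPt p (𝓟 (zeroLocus ℂ (Ideal.span H)))) : maxIdealAt H p ∈ minimalPrimes _ := by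
  have := (isMaximal_maxIdealAt hp).isPrime
  have hmin := ker_eval_mem_minimalPrimes_of_not_accPt hp hacc
  rw [Ideal.minimalPrimes_eq_comap, ← comap_mk_maxIdealAt (H := H)] at hmin
  obtain ⟨Q, hQ, hQ_comap⟩ := hmin
  rwa [← Ideal.comap_injective_of_surjective _ Ideal.Quotient.mk_surjective hQ_comap]

/-- The local ring at `p` of the scheme defined by the polynomial system `H`; its dimension over `ℂ`
is `zeroMultiplicity H p`. -/
abbrev LocalRingAt (H : Set (MvPolynomial (Fin n) ℂ)) (p : Fin n → ℂ)
    [(maxIdealAt H p).IsPrime] : Type :=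
  Localization.AtPrime (maxIdealAt H p)

theorem zeroMultiplicity_eq_finrank [hprime : (maxIdealAt H p).IsPrime] :
    zeroMultiplicity H p = Module.finrank ℂ (LocalRingAt H p) :=
  dif_pos hprime

theorem finite_localRingAt [(maxIdealAt H p).IsPrime] (hp : p ∈ zeroLocus ℂ (Ideal.span H))
    (hacc : ¬AccPt p (𝓟 (zeroLocus ℂ (Ideal.span H)))) : Module.Finite ℂ (LocalRingAt H p) :=
  have := isMaximal_maxIdealAt hp
  finite_localization_atPrime_of_mem_minimalPrimes ℂ (maxIdealAt_mem_minimalPrimes hp hacc)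

section

variable [(maxIdealAt H p).IsPrime] {a : MvPolynomial (Fin n) ℂ}

theorem isUnit_algebraMap_localRingAt (ha : eval p a ≠ 0) :
    IsUnit (algebraMap (MvPolynomial (Fin n) ℂ) (LocalRingAt H p) a) :=
  IsLocalization.map_units (M := (maxIdealAt H p).primeCompl) _
    ⟨Ideal.Quotient.mk _ a, fun hmem => ha (mk_mem_maxIdealAt_iff.1 hmem)⟩

theorem algebraMap_localRingAt_mem_maximalIdeal (ha : eval p a = 0) :
    algebraMap (MvPolynomial (Fin n) ℂ) (LocalRingAt H p) a ∈
      IsLocalRing.maximalIdeal (LocalRingAt H p) :=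
  (IsLocalization.AtPrime.to_map_mem_maximal_iff _ (maxIdealAt H p) _).2
    (mk_mem_maxIdealAt_iff.2 ha)

theorem algebraMap_localRingAt_eq_zero_iff :
    algebraMap (MvPolynomial (Fin n) ℂ) (LocalRingAt H p) a = 0 ↔
      ∃ s, eval p s ≠ 0 ∧ s * a ∈ Ideal.span H := by
  rw [IsScalarTower.algebraMap_apply _ (MvPolynomial (Fin n) ℂ ⧸ Ideal.span H) (LocalRingAt H p),
    IsLocalization.map_eq_zero_iff (maxIdealAt H p).primeCompl, Subtype.exists,
    Ideal.Quotient.mk_surjective.exists]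
  simp only [Ideal.Quotient.algebraMap_eq, ← map_mul, Ideal.Quotient.eq_zero_iff_mem,
    Ideal.mem_primeCompl_iff, mk_mem_maxIdealAt_iff, exists_prop]

theorem algebraMap_localRingAt_eq_zero_of_mem (ha : a ∈ Ideal.span H) :
    algebraMap (MvPolynomial (Fin n) ℂ) (LocalRingAt H p) a = 0 :=
  algebraMap_localRingAt_eq_zero_iff.2 ⟨1, by simp, by simpa using ha⟩

end

end LocalRingAt

theorem finrank_localRingAt_lt_of_subset {n : ℕ} {H H' : Set (MvPolynomial (Fin n) ℂ)}
    {p : Fin n → ℂ} [(maxIdealAt H p).IsPrime] [(maxIdealAt H' p).IsPrime]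
    [Module.Finite ℂ (LocalRingAt H p)] (hHH' : H ⊆ H') {a : MvPolynomial (Fin n) ℂ} (ha : a ∈ H')
    (ha_ne : algebraMap _ (LocalRingAt H p) a ≠ 0) :
    Module.finrank ℂ (LocalRingAt H' p) < Module.finrank ℂ (LocalRingAt H p) := by
  let φ := Ideal.Quotient.factorₐ ℂ (Ideal.span_mono hHH')
  have hcomap : maxIdealAt H p = (maxIdealAt H' p).comap φ := by
    refine Ideal.comap_injective_of_surjective _ Ideal.Quotient.mk_surjective ?_
    rw [comap_mk_maxIdealAt]
    exact comap_mk_maxIdealAt.symm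
  let ψ := Localization.localAlgHom (maxIdealAt H p) (maxIdealAt H' p) φ hcomap
  have hψ (b) : ψ (algebraMap _ _ b) = algebraMap (MvPolynomial (Fin n) ℂ) (LocalRingAt H' p) b :=
    Localization.localRingHom_to_map _ _ φ.toRingHom hcomap _
  have hψ_surj : Function.Surjective ψ :=
    surjective_localRingHom_of_eq_comap
      (Ideal.Quotient.factor_surjective (Ideal.span_mono hHH')) hcomap
  refine finrank_lt_of_surjective_of_not_injective (V := LocalRingAt H p)
    (W := LocalRingAt H' p) ψ.toLinearMap hψ_surj fun hinj => ha_ne ?_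
  refine hinj ((hψ a).trans ?_)
  rw [algebraMap_localRingAt_eq_zero_of_mem (Ideal.subset_span ha), map_zero]

section Deflation

variable {n : ℕ} {H : Set (MvPolynomial (Fin n) ℂ)} {p : Fin n → ℂ} [(maxIdealAt H p).IsPrime]
  {D : Derivation ℂ (MvPolynomial (Fin n) ℂ) (MvPolynomial (Fin n) ℂ)}

theorem algebraMap_localRingAt_derivation_eq_zero
    (hDH : ∀ h ∈ H, algebraMap _ (LocalRingAt H p) (D h) = 0) {a : MvPolynomial (Fin n) ℂ}
    (ha : algebraMap _ (LocalRingAt H p) a = 0) : algebraMap _ (LocalRingAt H p) (D a) = 0 := by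
  have hspan {b : MvPolynomial (Fin n) ℂ} (hb : b ∈ Ideal.span H) :
      algebraMap _ (LocalRingAt H p) (D b) = 0 := by
    induction hb using Submodule.span_induction with
    | mem h hh => exact hDH h hh
    | zero => simp only [map_zero]
    | add b c _ _ hb hc => rw [map_add, map_add, hb, hc, add_zero]
    | smul c b hb hDb =>
      rw [smul_eq_mul, Derivation.leibniz, map_add, smul_eq_mul, smul_eq_mul, map_mul, map_mul, hDb,
        algebraMap_localRingAt_eq_zero_of_mem hb, mul_zero, zero_mul, add_zero]
  obtain ⟨s, hs, hsa⟩ := algebraMap_localRingAt_eq_zero_iff.1 ha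
  have hDsa := hspan hsa
  rw [Derivation.leibniz, map_add, smul_eq_mul, smul_eq_mul, map_mul, map_mul, ha, zero_mul,
    add_zero] at hDsa
  exact (isUnit_algebraMap_localRingAt hs).mul_right_eq_zero.1 hDsa

theorem exists_algebraMap_localRingAt_derivation_ne_zero [Module.Finite ℂ (LocalRingAt H p)]
    (hD : ∃ a, eval p (D a) ≠ 0) :
    ∃ h ∈ H, algebraMap _ (LocalRingAt H p) (D h) ≠ 0 := by
  by_contra! hDH
  obtain ⟨a, ha⟩ := hD
  have : IsAddTorsionFree (LocalRingAt H p) := .of_isTorsionFree ℂ _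
  have hDa : D (a - C (eval p a)) = D a := by
    rw [map_sub, ← algebraMap_eq, D.map_algebraMap, sub_zero]
  have hmax := algebraMap_localRingAt_mem_maximalIdeal (H := H) (p := p) (a := a - C (eval p a))
    (by simp)
  refine not_isNilpotent_of_isUnit_map_derivation (algebraMap _ (LocalRingAt H p)) D
    (fun b => algebraMap_localRingAt_derivation_eq_zero hDH) ?_
    (isNilpotent_of_mem_maximalIdeal ℂ (A := LocalRingAt H p) hmax)
  rw [hDa]
  exact isUnit_algebraMap_localRingAt ha

end Deflation

theorem multiplicity_lt_of_deflation_right_kernel_general {n : ℕ} {ι : Type*}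
    (f : ι → MvPolynomial (Fin n) ℂ) (p : Fin n → ℂ) (hzero : ∀ i, eval p (f i) = 0)
    (hisolated : ∃ ε > 0, ∀ y : Fin n → ℂ, dist y p < ε → (∀ i, eval y (f i) = 0) → y = p)
    (D : Derivation ℂ (MvPolynomial (Fin n) ℂ) (MvPolynomial (Fin n) ℂ))
    (hD : ∃ a, eval p (D a) ≠ 0) (hker : ∀ i, eval p (D (f i)) = 0) :
    zeroMultiplicity (Set.range f ∪ Set.range fun i => D (f i)) p <
      zeroMultiplicity (Set.range f) p := by
  have hp : p ∈ zeroLocus ℂ (Ideal.span (Set.range f)) := by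
    simpa only [mem_zeroLocus_span_iff, Set.forall_mem_range] using hzero
  have hp' : p ∈ zeroLocus ℂ (Ideal.span (Set.range f ∪ Set.range fun i => D (f i))) := by
    rw [mem_zeroLocus_span_iff]
    rintro _ (⟨i, rfl⟩ | ⟨i, rfl⟩)
    exacts [hzero i, hker i]
  have := (isMaximal_maxIdealAt hp).isPrime
  have := (isMaximal_maxIdealAt hp').isPrime
  have := finite_localRingAt hp (not_accPt_zeroLocus_span_range hisolated)
  obtain ⟨_, ⟨i, rfl⟩, hi⟩ := exists_algebraMap_localRingAt_derivation_ne_zero (H := Set.range f) hD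
  rw [zeroMultiplicity_eq_finrank, zeroMultiplicity_eq_finrank]
  exact finrank_localRingAt_lt_of_subset Set.subset_union_left (Or.inr ⟨i, rfl⟩) hi

/-- Let `F = {f₁,…,fₙ} ⊂ ℂ[x₁,…,xₙ]` have an isolated singular zero
`p ∈ ℂⁿ` and let `λ ∈ ℂⁿ` be a nonzero vector with `J(F)(p)·λᵀ = 0`. For
`G = {λ₁ ∂fᵢ/∂x₁ + ⋯ + λₙ ∂fᵢ/∂xₙ : i = 1,…,n}`, the multiplicity of `p` as a zero of
`F ∪ G` is strictly smaller than the multiplicity of `p` as a zero of `F`. -/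
theorem multiplicity_lt_of_deflation_right_kernel {n : ℕ}
    (f : Fin n → MvPolynomial (Fin n) ℂ) (p : Fin n → ℂ)
    (hzero : ∀ i, eval p (f i) = 0)
    (hisolated : ∃ ε > 0, ∀ y : Fin n → ℂ, dist y p < ε → (∀ i, eval y (f i) = 0) → y = p)
    (hsingular : jacRank f p < n)
    (lam : Fin n → ℂ) (hlam : lam ≠ 0)
    (hker : ∀ i : Fin n, ∑ j : Fin n, eval p (pderiv j (f i)) * lam j = 0) :
    zeroMultiplicity
        (Set.range f ∪
          Set.range fun i : Fin n => ∑ j : Fin n, C (lam j) * pderiv j (f i)) p <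
      zeroMultiplicity (Set.range f) p := by
  have hD_apply := mkDerivation_eq_sum_pderiv (R := ℂ) fun j => C (lam j)
  obtain ⟨j, hj⟩ := Function.ne_iff.1 hlam
  simpa only [hD_apply] using multiplicity_lt_of_deflation_right_kernel_general f p hzero
    hisolated (mkDerivation ℂ fun j => C (lam j)) ⟨X j, by simpa [mkDerivation_X] using hj⟩
    fun i => by simpa [hD_apply, mul_comm] using hker i
end
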